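/- arXiv:2511.07259 — 6 statements merged into one kernel-verified Lean document; each statement's English description precedes it below -/
import Mathlib

section
/- For any μ ≥ 1 and σ > 0, ∫_{-1}^{1} (t²)^{2μ-2} e^{-(1/2)(t²/σ²)^{μ}} dt = (1/μ) γ^mod((4μ-3)/(2μ), 1/(2σ^{2μ})). Consequently, the function k̃_{σ,μ}(t) = [μ / γ^mod((4μ-3)/(2μ), 1/(2σ^{2μ}))] (t²)^{2μ-2} e^{-(1/2)(t²/σ²)^{μ}} is a probability density function on [-1,1], i.e. it is nonnegative and integrates to 1 over [-1,1]. -/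
open MeasureTheory

/-- Lower incomplete gamma function `γ(s,z) = ∫₀^z u^(s-1) e^(-u) du`. -/
noncomputable def lowGamma (s z : ℝ) : ℝ := ∫ u in (0:ℝ)..z, u ^ (s - 1) * Real.exp (-u)

/-- Modified lower incomplete gamma function `γ^mod(s,z) = γ(s,z)/z^s`. -/
noncomputable def gammaMod (s z : ℝ) : ℝ := lowGamma s z / z ^ s

/-- First family of densities `k̃_{σ,μ}` on `[-1,1]`. -/
noncomputable def kTilde (σ μ t : ℝ) : ℝ :=
  (μ / gammaMod ((4 * μ - 3) / (2 * μ)) (1 / (2 * σ ^ (2 * μ)))) *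
    (t ^ 2) ^ (2 * μ - 2) * Real.exp (-(1 / 2) * (t ^ 2 / σ ^ 2) ^ μ)

/-- For `μ ≥ 1`, `σ > 0`:
`∫_{-1}^{1} (t²)^{2μ-2} e^{-(1/2)(t²/σ²)^μ} dt = (1/μ) γ^mod((4μ-3)/(2μ), 1/(2σ^{2μ}))`,
and `k̃_{σ,μ}` is a probability density function on `[-1,1]`. -/
theorem kTilde_is_pdf (σ μ : ℝ) (hσ : 0 < σ) (hμ : 1 ≤ μ) :
    (∫ t in (-1:ℝ)..1, (t ^ 2) ^ (2 * μ - 2) * Real.exp (-(1 / 2) * (t ^ 2 / σ ^ 2) ^ μ)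
        = (1 / μ) * gammaMod ((4 * μ - 3) / (2 * μ)) (1 / (2 * σ ^ (2 * μ)))) ∧
    (∀ t ∈ Set.Icc (-1:ℝ) 1, 0 ≤ kTilde σ μ t) ∧
    (∫ t in (-1:ℝ)..1, kTilde σ μ t = 1) := by
  have hμ0 : 0 < μ := by linarith
  set F : ℝ → ℝ := fun t => (t ^ 2) ^ (2 * μ - 2) * Real.exp (-(1 / 2) * (t ^ 2 / σ ^ 2) ^ μ)
    with hF
  set s : ℝ := (4 * μ - 3) / (2 * μ) with hs
  set z : ℝ := 1 / (2 * σ ^ (2 * μ)) with hz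
  have hσp : 0 < σ ^ (2 * μ) := Real.rpow_pos_of_pos hσ _
  have hz0 : 0 < z := by positivity
  have hzs : 0 < z ^ s := Real.rpow_pos_of_pos hz0 _
  have hFc : Continuous F := by
    apply Continuous.mul
    · exact (continuous_pow 2).rpow_const (fun x => Or.inr (by linarith))
    · apply Real.continuous_exp.comp
      apply continuous_const.mul
      exact ((continuous_pow 2).div_const _).rpow_const (fun x => Or.inr (by linarith))
  have hpos : 0 < ∫ t in (0:ℝ)..1, F t := by
    apply intervalIntegral.intervalIntegral_pos_of_pos_on (hFc.intervalIntegrable _ _) _ one_pos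
    intro x hx
    have hx0 : 0 < x := hx.1
    simp only [hF]
    positivity
  have heven : ∫ t in (-1:ℝ)..1, F t = 2 * ∫ t in (0:ℝ)..1, F t := by
    have h1 : ∫ t in (-1:ℝ)..0, F t = ∫ t in (0:ℝ)..1, F t := by
      have h := intervalIntegral.integral_comp_neg (a := (0:ℝ)) (b := 1) F
      rw [neg_zero] at h
      rw [← h]
      simp [hF]
    rw [← intervalIntegral.integral_add_adjacent_intervals (b := (0:ℝ))
      (hFc.intervalIntegrable _ _) (hFc.intervalIntegrable _ _), h1]
    ring
  have hlow : lowGamma s z = z ^ s * (2 * μ) * ∫ t in (0:ℝ)..1, F t := by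
    have h := intervalIntegral.integral_comp_mul_deriv_of_deriv_nonneg (a := (0:ℝ)) (b := 1)
      (f := fun t => z * t ^ (2 * μ)) (f' := fun t => z * (2 * μ * t ^ (2 * μ - 1)))
      (g := fun u => u ^ (s - 1) * Real.exp (-u)) ?_ ?_ ?_
    · rw [Real.zero_rpow (by positivity), Real.one_rpow, mul_zero, mul_one] at h
      rw [lowGamma, ← h, ← intervalIntegral.integral_const_mul]
      apply intervalIntegral.integral_congr_ae
      refine Filter.Eventually.of_forall fun t ht => ?_
      rw [Set.uIoc_of_le zero_le_one] at ht
      have ht0 : 0 < t := ht.1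
      simp only [Function.comp, hF]
      have e1 : (t ^ 2 / σ ^ 2) ^ μ = t ^ (2 * μ) / σ ^ (2 * μ) := by
        rw [Real.div_rpow (by positivity) (by positivity), Real.rpow_mul ht0.le,
          Real.rpow_mul hσ.le, Real.rpow_two, Real.rpow_two]
      have e2 : -(1 / 2) * (t ^ 2 / σ ^ 2) ^ μ = -(z * t ^ (2 * μ)) := by
        rw [e1, hz]; field_simp
      have e3 : (z * t ^ (2 * μ)) ^ (s - 1) = z ^ (s - 1) * t ^ (2 * μ * (s - 1)) := by
        rw [Real.mul_rpow hz0.le (by positivity), ← Real.rpow_mul ht0.le]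
      have e4 : (t ^ 2) ^ (2 * μ - 2) = t ^ (2 * μ * (s - 1)) * t ^ (2 * μ - 1) := by
        rw [← Real.rpow_two, ← Real.rpow_mul ht0.le, ← Real.rpow_add ht0]
        congr 1
        rw [hs]; field_simp; ring
      have e5 : z ^ s = z ^ (s - 1) * z := by
        rw [Real.rpow_sub_one hz0.ne']; field_simp
      rw [e2, e3, e4, e5]
      ring
    · apply Continuous.continuousOn
      exact continuous_const.mul (continuous_id.rpow_const (fun x => Or.inr (by positivity)))
    · intro x hx
      have hx0 : 0 < x := by simpa using hx.1
      exact (Real.hasDerivAt_rpow_const (Or.inl hx0.ne')).const_mul z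
    · intro x hx
      have hx0 : 0 < x := by simpa using hx.1
      positivity
  have hmod : gammaMod s z = 2 * μ * ∫ t in (0:ℝ)..1, F t := by
    rw [gammaMod, hlow]; field_simp
  have hk : ∀ t, kTilde σ μ t = μ / gammaMod s z * F t := fun t => by
    simp only [kTilde, hF, ← hs, ← hz]; ring
  have hm0 : 0 < gammaMod s z := by rw [hmod]; positivity
  have hI : ∫ t in (-1:ℝ)..1, F t = 1 / μ * gammaMod s z := by
    rw [heven, hmod]; field_simp
  refine ⟨hI, fun t _ => ?_, ?_⟩
  · rw [hk]
    have : 0 ≤ F t := by simp only [hF]; positivity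
    positivity
  · simp only [hk]
    rw [intervalIntegral.integral_const_mul, hI]
    field_simp
end

section
/- For any μ ≥ 1, σ > 0, and integer m ≥ 0, the m-th moment t_{m,σ,μ} = ∫_{-1}^{1} t^m k̃_{σ,μ}(t) dt satisfies: t_{m,σ,μ} = 0 if m is odd, and t_{2k,σ,μ} = γ^mod((2k+4μ-3)/(2μ), 1/(2σ^{2μ})) / γ^mod((4μ-3)/(2μ), 1/(2σ^{2μ})) if m = 2k is even. -/
open MeasureTheory

theorem gammaMod_eq_aux (s μ z : ℝ) (hμ : 0 < μ) (hz : 0 < z) :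
    gammaMod s z = 2 * μ * ∫ t in (0:ℝ)..1, t ^ (2 * μ * s - 1) * Real.exp (-(z * t ^ (2 * μ))) := by
  have him : (fun t : ℝ => z * t ^ (2 * μ)) '' (Set.Ioc 0 1) = Set.Ioc 0 z := by
    ext y
    constructor
    · rintro ⟨t, ⟨h0, h1⟩, rfl⟩
      refine ⟨mul_pos hz (Real.rpow_pos_of_pos h0 _), ?_⟩
      have := Real.rpow_le_one h0.le h1 (by positivity : 0 ≤ 2 * μ)
      show z * t ^ (2 * μ) ≤ z
      nlinarith
    · rintro ⟨h0, h1⟩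
      have hyz : 0 < y / z := div_pos h0 hz
      refine ⟨(y / z) ^ (2 * μ)⁻¹, ⟨Real.rpow_pos_of_pos hyz _, ?_⟩, ?_⟩
      · exact Real.rpow_le_one hyz.le ((div_le_one hz).2 h1) (by positivity)
      · show z * ((y / z) ^ (2 * μ)⁻¹) ^ (2 * μ) = y
        rw [Real.rpow_inv_rpow hyz.le (by positivity)]
        field_simp
  have hinj : Set.InjOn (fun t : ℝ => z * t ^ (2 * μ)) (Set.Ioc 0 1) := by
    intro a ha b hb hab
    have h : a ^ (2 * μ) = b ^ (2 * μ) := mul_left_cancel₀ hz.ne' hab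
    exact Real.rpow_left_injOn (by positivity : 2 * μ ≠ 0) ha.1.le hb.1.le h
  have hcv := integral_image_eq_integral_abs_deriv_smul (s := Set.Ioc (0:ℝ) 1)
    (f := fun t : ℝ => z * t ^ (2 * μ)) (f' := fun t => z * (2 * μ * t ^ (2 * μ - 1)))
    measurableSet_Ioc
    (fun x hx => ((Real.hasDerivAt_rpow_const (Or.inl hx.1.ne')).const_mul z).hasDerivWithinAt)
    hinj (fun u => u ^ (s - 1) * Real.exp (-u))
  rw [him] at hcv
  unfold gammaMod lowGamma
  rw [intervalIntegral.integral_of_le hz.le, hcv, intervalIntegral.integral_of_le zero_le_one,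
    div_eq_mul_inv, mul_comm, ← integral_const_mul, ← integral_const_mul]
  refine setIntegral_congr_fun measurableSet_Ioc (fun t ht => ?_)
  have h0 : 0 < t := ht.1
  simp only [smul_eq_mul]
  rw [abs_of_pos (by positivity), Real.mul_rpow hz.le (by positivity), ← Real.rpow_mul h0.le,
    Real.rpow_sub_one hz.ne']
  have e : t ^ (2 * μ * s - 1) = t ^ (2 * μ - 1) * t ^ (2 * μ * (s - 1)) := by
    rw [← Real.rpow_add h0]; congr 1; ring
  rw [e]
  have := (Real.rpow_pos_of_pos hz s).ne'
  field_simp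

theorem kTilde_neg_aux (σ μ t : ℝ) : kTilde σ μ (-t) = kTilde σ μ t := by
  simp [kTilde]

theorem kTilde_cont_aux (σ μ : ℝ) (hμ : 1 ≤ μ) : Continuous (kTilde σ μ) := by
  unfold kTilde
  have h1 : Continuous fun t : ℝ => (t ^ 2) ^ (2 * μ - 2) :=
    (continuous_pow 2).rpow_const (fun _ => Or.inr (by linarith))
  have h2 : Continuous fun t : ℝ => (t ^ 2 / σ ^ 2) ^ μ :=
    ((continuous_pow 2).div_const _).rpow_const (fun _ => Or.inr (by linarith))
  fun_prop

/-- Moments of `k̃_{σ,μ}`: the odd moments vanish and the even moments are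
ratios of modified incomplete gamma functions. -/
theorem kTilde_moments (σ μ : ℝ) (hσ : 0 < σ) (hμ : 1 ≤ μ) (m : ℕ) :
    (Odd m → ∫ t in (-1:ℝ)..1, t ^ m * kTilde σ μ t = 0) ∧
    (∀ k : ℕ, m = 2 * k →
      ∫ t in (-1:ℝ)..1, t ^ m * kTilde σ μ t
        = gammaMod ((2 * (k:ℝ) + 4 * μ - 3) / (2 * μ)) (1 / (2 * σ ^ (2 * μ)))
          / gammaMod ((4 * μ - 3) / (2 * μ)) (1 / (2 * σ ^ (2 * μ)))) := by
  constructor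
  · intro hm
    have h := intervalIntegral.integral_comp_neg (a := (-1:ℝ)) (b := 1)
      (fun t => t ^ m * kTilde σ μ t)
    simp only [hm.neg_pow, kTilde_neg_aux, neg_mul, intervalIntegral.integral_neg, neg_neg] at h
    linarith
  · rintro k rfl
    have hμ0 : 0 < μ := by linarith
    have hc : Continuous fun t : ℝ => t ^ (2 * k) * kTilde σ μ t :=
      (continuous_pow _).mul (kTilde_cont_aux σ μ hμ)
    have h := intervalIntegral.integral_comp_neg (a := (0:ℝ)) (b := 1)
      (fun t => t ^ (2 * k) * kTilde σ μ t)
    simp only [(even_two_mul k).neg_pow, kTilde_neg_aux, neg_zero] at h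
    rw [← intervalIntegral.integral_add_adjacent_intervals (hc.intervalIntegrable (-1) 0)
      (hc.intervalIntegrable 0 1), ← h,
      gammaMod_eq_aux ((2 * (k:ℝ) + 4 * μ - 3) / (2 * μ)) μ _ hμ0 (by positivity)]
    have key : ∫ t in (0:ℝ)..1, t ^ (2 * k) * kTilde σ μ t
        = (μ / gammaMod ((4 * μ - 3) / (2 * μ)) (1 / (2 * σ ^ (2 * μ)))) *
          ∫ t in (0:ℝ)..1, t ^ (2 * μ * ((2 * (k:ℝ) + 4 * μ - 3) / (2 * μ)) - 1) *
            Real.exp (-(1 / (2 * σ ^ (2 * μ)) * t ^ (2 * μ))) := by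
      rw [← intervalIntegral.integral_const_mul, intervalIntegral.integral_of_le zero_le_one,
        intervalIntegral.integral_of_le zero_le_one]
      refine setIntegral_congr_fun measurableSet_Ioc (fun t ht => ?_)
      have h0 : 0 < t := ht.1
      have hs : ∀ x : ℝ, 0 < x → ∀ p : ℝ, (x ^ 2) ^ p = x ^ (2 * p) := by
        intro x hx p
        rw [← Real.rpow_natCast, ← Real.rpow_mul hx.le]; norm_num
      have e1 : t ^ (2 * μ * ((2 * (k:ℝ) + 4 * μ - 3) / (2 * μ)) - 1)
          = t ^ (2 * k) * (t ^ 2) ^ (2 * μ - 2) := by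
        rw [hs t h0, ← Real.rpow_natCast t (2 * k), ← Real.rpow_add h0]
        congr 1
        push_cast
        field_simp
        ring
      have e2 : -(1 / 2) * (t ^ 2 / σ ^ 2) ^ μ = -(1 / (2 * σ ^ (2 * μ)) * t ^ (2 * μ)) := by
        rw [Real.div_rpow (by positivity) (by positivity), hs t h0, hs σ hσ]
        field_simp
      simp only [kTilde]
      rw [e1, e2]
      ring
    rw [key]
    ring
end

section
/- For any fixed μ ≥ 1 and any t ∈ [-1,1], the pointwise limit as σ → ∞ of k̃_{σ,μ}(t) exists and equals ((4μ-3)/2) (t²)^{2μ-2}; in particular the limiting function is a beta-type probability density on [-1,1]. -/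
open MeasureTheory Filter

theorem gammaMod_bounds (s z : ℝ) (hs : 0 < s) (hz : 0 < z) :
    Real.exp (-z) / s ≤ gammaMod s z ∧ gammaMod s z ≤ 1 / s := by
  have hi : IntervalIntegrable (fun u : ℝ => u ^ (s - 1)) volume 0 z :=
    intervalIntegral.intervalIntegrable_rpow' (by linarith)
  have hI : ∫ u in (0:ℝ)..z, u ^ (s - 1) = z ^ s / s := by
    rw [integral_rpow (Or.inl (by linarith))]
    simp [Real.zero_rpow hs.ne']
  have hi2 : IntervalIntegrable (fun u : ℝ => u ^ (s - 1) * Real.exp (-u)) volume 0 z :=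
    hi.mul_continuousOn (by fun_prop)
  have hzs : 0 < z ^ s := Real.rpow_pos_of_pos hz s
  unfold gammaMod lowGamma
  constructor
  · rw [le_div_iff₀ hzs]
    have h := intervalIntegral.integral_mono_on hz.le (hi.mul_const (Real.exp (-z))) hi2
      (fun u hu => mul_le_mul_of_nonneg_left (Real.exp_le_exp.2 (neg_le_neg hu.2))
        (Real.rpow_nonneg hu.1 _))
    rw [intervalIntegral.integral_mul_const, hI] at h
    calc _ = z ^ s / s * Real.exp (-z) := by ring
      _ ≤ _ := h
  · rw [div_le_iff₀ hzs]
    have h := intervalIntegral.integral_mono_on hz.le hi2 hi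
      (fun u hu => mul_le_of_le_one_right (Real.rpow_nonneg hu.1 (s - 1))
        (Real.exp_le_one_iff.2 (neg_nonpos.2 hu.1)))
    rw [hI] at h
    calc _ ≤ z ^ s / s := h
      _ = _ := by ring

/-- For fixed `μ ≥ 1` and `t ∈ [-1,1]`, `k̃_{σ,μ}(t) → ((4μ-3)/2)(t²)^{2μ-2}` as
`σ → ∞`; the limiting function is a beta-type probability density on `[-1,1]`. -/
theorem kTilde_tendsto_beta (μ : ℝ) (hμ : 1 ≤ μ) :
    (∀ t ∈ Set.Icc (-1:ℝ) 1,
      Tendsto (fun σ : ℝ => kTilde σ μ t) atTop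
        (nhds ((4 * μ - 3) / 2 * (t ^ 2) ^ (2 * μ - 2)))) ∧
    (∀ t ∈ Set.Icc (-1:ℝ) 1, 0 ≤ (4 * μ - 3) / 2 * (t ^ 2) ^ (2 * μ - 2)) ∧
    (∫ t in (-1:ℝ)..1, (4 * μ - 3) / 2 * (t ^ 2) ^ (2 * μ - 2) = 1) := by
  refine ⟨fun t _ => ?_, fun t _ => ?_, ?_⟩
  · have hs : 0 < (4 * μ - 3) / (2 * μ) := by apply div_pos <;> linarith
    have hz : Tendsto (fun σ : ℝ => 1 / (2 * σ ^ (2 * μ))) atTop (nhds 0) :=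
      Tendsto.div_atTop tendsto_const_nhds
        ((tendsto_rpow_atTop (by linarith : 0 < 2 * μ)).const_mul_atTop two_pos)
    have hg : Tendsto (fun σ : ℝ => gammaMod ((4 * μ - 3) / (2 * μ)) (1 / (2 * σ ^ (2 * μ))))
        atTop (nhds (1 / ((4 * μ - 3) / (2 * μ)))) := by
      have h1 : Tendsto (fun σ : ℝ => Real.exp (-(1 / (2 * σ ^ (2 * μ)))) / ((4 * μ - 3) / (2 * μ)))
          atTop (nhds (1 / ((4 * μ - 3) / (2 * μ)))) := by
        have := ((Real.continuous_exp.tendsto _).comp hz.neg).div_const ((4 * μ - 3) / (2 * μ))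
        simpa only [neg_zero, Real.exp_zero, Function.comp_def] using this
      refine tendsto_of_tendsto_of_tendsto_of_le_of_le' h1 tendsto_const_nhds ?_ ?_
      all_goals
        filter_upwards [eventually_gt_atTop (0:ℝ)] with σ hσ
        have := gammaMod_bounds _ (1 / (2 * σ ^ (2 * μ))) hs
          (by have := Real.rpow_pos_of_pos hσ (2 * μ); positivity)
      · exact this.1
      · exact this.2
    have he : Tendsto (fun σ : ℝ => Real.exp (-(1 / 2) * (t ^ 2 / σ ^ 2) ^ μ)) atTop (nhds 1) := by
      have h0 : Tendsto (fun σ : ℝ => t ^ 2 / σ ^ 2) atTop (nhds 0) :=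
        Tendsto.div_atTop tendsto_const_nhds (tendsto_pow_atTop two_ne_zero)
      have h1 := (h0.rpow_const (p := μ) (Or.inr (by linarith))).const_mul (-(1 / 2) : ℝ)
      rw [Real.zero_rpow (by linarith), mul_zero] at h1
      simpa only [Real.exp_zero, Function.comp_def] using (Real.continuous_exp.tendsto _).comp h1
    have := (((tendsto_const_nhds (x := μ)).div hg (by positivity)).mul_const
      ((t ^ 2) ^ (2 * μ - 2))).mul he
    unfold kTilde
    have h3 : (4 * μ - 3) ≠ 0 := by linarith
    have h4 : μ ≠ 0 := by linarith
    have h5 : (4 * μ - 3) / 2 * (t ^ 2) ^ (2 * μ - 2) =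
        μ / (1 / ((4 * μ - 3) / (2 * μ))) * (t ^ 2) ^ (2 * μ - 2) * 1 := by
      rw [mul_one]
      congr 1
      field_simp
    rw [h5]
    exact this
  · have : 0 ≤ (4 * μ - 3) / 2 := by linarith
    positivity
  · rw [intervalIntegral.integral_const_mul]
    have hp : ∀ t : ℝ, 0 ≤ t → (t ^ 2) ^ (2 * μ - 2) = t ^ (4 * μ - 4) := fun t ht => by
      rw [← Real.rpow_natCast, ← Real.rpow_mul ht]
      congr 1
      push_cast
      ring
    have hc : Continuous (fun t : ℝ => (t ^ 2) ^ (2 * μ - 2)) :=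
      (continuous_pow 2).rpow_const (fun _ => Or.inr (by linarith))
    have hr : ∫ t in (0:ℝ)..1, (t ^ 2) ^ (2 * μ - 2) = 1 / (4 * μ - 3) := by
      rw [intervalIntegral.integral_congr (g := fun t => t ^ (4 * μ - 4))]
      · rw [integral_rpow (Or.inl (by linarith)), Real.one_rpow, Real.zero_rpow (by linarith)]
        congr 1 <;> ring
      · intro t ht
        rw [Set.uIcc_of_le zero_le_one] at ht
        exact hp t ht.1
    have hl : ∫ t in (-1:ℝ)..0, (t ^ 2) ^ (2 * μ - 2) = 1 / (4 * μ - 3) := by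
      rw [← hr]
      have := intervalIntegral.integral_comp_neg (a := (-1:ℝ)) (b := 0)
        (fun t : ℝ => (t ^ 2) ^ (2 * μ - 2))
      simpa using this
    rw [← intervalIntegral.integral_add_adjacent_intervals (b := 0)
      (hc.intervalIntegrable _ _) (hc.intervalIntegrable _ _), hl, hr]
    have : (4 * μ - 3) ≠ 0 := by linarith
    field_simp
    norm_num
end

section
/- For any μ ≥ 1 and σ > 0, the quadratic polynomial q_{σ,μ}(t) = t² - γ^mod((2μ+1)/(2(2μ-1)), 1/(2σ^{4μ-2})) / γ^mod(1/2, 1/(2σ^{4μ-2})) is orthogonal to all polynomials of degree at most 1 on [-1,1] with respect to the weight g̃_{σ,μ}; that is, ∫_{-1}^{1} q_{σ,μ}(t)(α + βt) g̃_{σ,μ}(t) dt = 0 for all real α, β. -/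
open MeasureTheory

/-- Second family of densities `g̃_{σ,μ}` on `[-1,1]`. -/
noncomputable def gTilde (σ μ t : ℝ) : ℝ :=
  ((2 * μ - 1) / gammaMod (1 / 2) (1 / (2 * σ ^ (4 * μ - 2)))) *
    (t ^ 2) ^ (μ - 1) * Real.exp (-(1 / 2) * (t ^ 2 / σ ^ 2) ^ (2 * μ - 1))

/-- The quadratic polynomial `q_{σ,μ}`. -/
noncomputable def qPoly (σ μ t : ℝ) : ℝ :=
  t ^ 2 - gammaMod ((2 * μ + 1) / (2 * (2 * μ - 1))) (1 / (2 * σ ^ (4 * μ - 2)))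
            / gammaMod (1 / 2) (1 / (2 * σ ^ (4 * μ - 2)))

lemma aux_gammaMod (s z p : ℝ) (hz : 0 < z) (hp : 1 ≤ p) (hs : 0 < s) (hps : 1 ≤ 2 * p * s) :
    gammaMod s z = 2 * p * ∫ t in (0:ℝ)..1, t ^ (2 * p * s - 1) * Real.exp (-(z * t ^ (2 * p))) := by
  have hpt : ∀ t ∈ Set.Ioc (0:ℝ) 1,
      (z * t ^ (2 * p)) ^ (s - 1) * Real.exp (-(z * t ^ (2 * p))) * (z * (2 * p * t ^ (2 * p - 1)))
        = z ^ s * (2 * p) * (t ^ (2 * p * s - 1) * Real.exp (-(z * t ^ (2 * p)))) := by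
    intro t ht
    have ht0 : 0 < t := ht.1
    rw [Real.mul_rpow hz.le (by positivity), ← Real.rpow_mul ht0.le]
    have e1 : z ^ s = z ^ (s - 1) * z := by
      rw [← Real.rpow_add_one hz.ne']; congr 1; ring
    have e2 : t ^ (2 * p * s - 1) = t ^ (2 * p * (s - 1)) * t ^ (2 * p - 1) := by
      rw [← Real.rpow_add ht0]; congr 1; ring
    rw [e1, e2]; ring
  have hcont : Continuous fun t : ℝ =>
      z ^ s * (2 * p) * (t ^ (2 * p * s - 1) * Real.exp (-(z * t ^ (2 * p)))) := by
    have h1 : Continuous fun t : ℝ => t ^ (2 * p * s - 1) :=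
      Real.continuous_rpow_const (by linarith)
    have h2 : Continuous fun t : ℝ => t ^ (2 * p) :=
      Real.continuous_rpow_const (by linarith)
    fun_prop
  have key := intervalIntegral.integral_comp_mul_deriv''' (a := 0) (b := 1)
    (f := fun t : ℝ => z * t ^ (2 * p)) (f' := fun t => z * (2 * p * t ^ (2 * p - 1)))
    (g := fun u => u ^ (s - 1) * Real.exp (-u)) ?_ ?_ ?_ ?_ ?_
  · simp only [Function.comp_def] at key
    rw [Real.zero_rpow (by linarith), Real.one_rpow, mul_zero, mul_one] at key
    unfold gammaMod lowGamma
    rw [← key, intervalIntegral.integral_of_le zero_le_one,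
      setIntegral_congr_fun measurableSet_Ioc hpt, ← intervalIntegral.integral_of_le zero_le_one,
      intervalIntegral.integral_const_mul]
    have : z ^ s ≠ 0 := (Real.rpow_pos_of_pos hz s).ne'
    field_simp
  · exact (continuous_const.mul (Real.continuous_rpow_const (by linarith))).continuousOn
  · intro x hx
    simp at hx
    exact ((Real.hasDerivAt_rpow_const (Or.inl hx.1.ne')).const_mul z).hasDerivWithinAt
  · rintro _ ⟨x, hx, rfl⟩
    simp only [min_eq_left (zero_le_one' ℝ), max_eq_right (zero_le_one' ℝ)] at hx
    have : 0 < z * x ^ (2 * p) := mul_pos hz (Real.rpow_pos_of_pos hx.1 _)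
    apply ContinuousAt.continuousWithinAt
    exact (Real.continuousAt_rpow_const _ _ (Or.inl this.ne')).mul (by fun_prop)
  · have hsub : (fun t : ℝ => z * t ^ (2 * p)) '' Set.uIcc 0 1 ⊆ Set.Icc 0 z := by
      rintro _ ⟨x, hx, rfl⟩
      rw [Set.uIcc_of_le zero_le_one] at hx
      have h0 := Real.rpow_nonneg hx.1 (2 * p)
      have h1 := Real.rpow_le_one hx.1 hx.2 (by linarith : 0 ≤ 2 * p)
      exact ⟨by positivity, by nlinarith⟩
    refine IntegrableOn.mono_set ?_ hsub
    rw [← intervalIntegrable_iff_integrableOn_Icc_of_le hz.le]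
    exact (intervalIntegral.intervalIntegrable_rpow' (by linarith)).mul_continuousOn (by fun_prop)
  · rw [Set.uIcc_of_le zero_le_one, integrableOn_Icc_iff_integrableOn_Ioc]
    refine IntegrableOn.congr_fun ?_ (fun t ht => (hpt t ht).symm) measurableSet_Ioc
    exact (hcont.integrableOn_Icc).mono_set Set.Ioc_subset_Icc_self

/-- `q_{σ,μ}` is orthogonal to all polynomials of degree at most one on `[-1,1]`
with respect to the weight `g̃_{σ,μ}`. -/
theorem qPoly_orthogonal_to_linear (σ μ : ℝ) (hσ : 0 < σ) (hμ : 1 ≤ μ) :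
    ∀ α β : ℝ,
      ∫ t in (-1:ℝ)..1, qPoly σ μ t * (α + β * t) * gTilde σ μ t = 0 := by
  intro α β
  have hz : 0 < 1 / (2 * σ ^ (4 * μ - 2)) := by positivity
  have hA := aux_gammaMod (1 / 2) _ (2 * μ - 1) hz (by linarith) (by norm_num) (by linarith)
  have hp : 0 < 2 * μ - 1 := by linarith
  have hs : 2 * (2 * μ - 1) * ((2 * μ + 1) / (2 * (2 * μ - 1))) = 2 * μ + 1 := by
    field_simp
  have hB := aux_gammaMod ((2 * μ + 1) / (2 * (2 * μ - 1))) _ (2 * μ - 1) hz (by linarith)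
    (by apply div_pos <;> linarith) (by rw [hs]; linarith)
  rw [hs] at hB
  unfold qPoly gTilde
  set W : ℝ → ℝ := fun t => (t ^ 2) ^ (μ - 1) *
    Real.exp (-(1 / 2) * (t ^ 2 / σ ^ 2) ^ (2 * μ - 1)) with hW
  have hWc : Continuous W := by
    have h1 : Continuous fun t : ℝ => (t ^ 2) ^ (μ - 1) :=
      (Real.continuous_rpow_const (by linarith)).comp (by fun_prop : Continuous fun t : ℝ => t ^ 2)
    have h2 : Continuous fun t : ℝ => (t ^ 2 / σ ^ 2) ^ (2 * μ - 1) :=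
      (Real.continuous_rpow_const (by linarith)).comp
        (by fun_prop : Continuous fun t : ℝ => t ^ 2 / σ ^ 2)
    fun_prop
  have hWeven : ∀ t, W (-t) = W t := by intro t; simp [hW]
  have hexp : ∀ t : ℝ, 0 < t → 1 / (2 * σ ^ (4 * μ - 2)) * t ^ (2 * (2 * μ - 1))
      = 1 / 2 * (t ^ 2 / σ ^ 2) ^ (2 * μ - 1) := by
    intro t ht
    rw [Real.div_rpow (by positivity) (by positivity), ← Real.rpow_natCast t, ← Real.rpow_natCast σ,
      ← Real.rpow_mul ht.le, ← Real.rpow_mul hσ.le]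
    push_cast
    rw [show 2 * (2 * μ - 1) = 4 * μ - 2 by ring]
    field_simp
  have hA' : (∫ t in (0:ℝ)..1, t ^ (2 * (2 * μ - 1) * (1 / 2) - 1) *
      Real.exp (-(1 / (2 * σ ^ (4 * μ - 2)) * t ^ (2 * (2 * μ - 1))))) = ∫ t in (0:ℝ)..1, W t := by
    rw [intervalIntegral.integral_of_le zero_le_one, intervalIntegral.integral_of_le zero_le_one]
    refine setIntegral_congr_fun measurableSet_Ioc fun t ht => ?_
    simp only [hW]
    rw [hexp t ht.1, ← Real.rpow_natCast t, ← Real.rpow_mul ht.1.le, neg_mul]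
    congr 2; push_cast; ring
  have hB' : (∫ t in (0:ℝ)..1, t ^ (2 * μ + 1 - 1) *
      Real.exp (-(1 / (2 * σ ^ (4 * μ - 2)) * t ^ (2 * (2 * μ - 1)))))
        = ∫ t in (0:ℝ)..1, t ^ 2 * W t := by
    rw [intervalIntegral.integral_of_le zero_le_one, intervalIntegral.integral_of_le zero_le_one]
    refine setIntegral_congr_fun measurableSet_Ioc fun t ht => ?_
    simp only [hW]
    rw [hexp t ht.1, neg_mul, ← mul_assoc]
    congr 1
    rw [← Real.rpow_natCast t, ← Real.rpow_mul ht.1.le, ← Real.rpow_add ht.1]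
    congr 1; push_cast; ring
  rw [hA'] at hA
  rw [hB'] at hB
  generalize gammaMod (1 / 2) (1 / (2 * σ ^ (4 * μ - 2))) = A at *
  generalize gammaMod ((2 * μ + 1) / (2 * (2 * μ - 1))) (1 / (2 * σ ^ (4 * μ - 2))) = B at *
  by_cases hA0 : A = 0
  · simp [hA0]
  have hF : Continuous fun t : ℝ => (t ^ 2 - B / A) * (α + β * t) * ((2 * μ - 1) / A * W t) := by
    fun_prop
  have hN : Continuous fun t : ℝ =>
      ((-t) ^ 2 - B / A) * (α + β * (-t)) * ((2 * μ - 1) / A * W (-t)) := by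
    fun_prop
  have e0 : (∫ t in (-1:ℝ)..1, (t ^ 2 - B / A) * (α + β * t) *
      ((2 * μ - 1) / A * (t ^ 2) ^ (μ - 1) *
        Real.exp (-(1 / 2) * (t ^ 2 / σ ^ 2) ^ (2 * μ - 1)))) =
      ∫ t in (-1:ℝ)..1, (t ^ 2 - B / A) * (α + β * t) * ((2 * μ - 1) / A * W t) := by
    congr 1; ext t; simp only [hW]; ring
  rw [e0, ← intervalIntegral.integral_add_adjacent_intervals (b := 0)
    (hF.intervalIntegrable _ _) (hF.intervalIntegrable _ _)]
  have e1 := intervalIntegral.integral_comp_neg (a := 0) (b := 1)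
    (fun t : ℝ => (t ^ 2 - B / A) * (α + β * t) * ((2 * μ - 1) / A * W t))
  rw [neg_zero] at e1
  rw [← e1, ← intervalIntegral.integral_add
    (hN.intervalIntegrable _ _) (hF.intervalIntegrable _ _)]
  have e2 : (∫ t in (0:ℝ)..1, (((-t) ^ 2 - B / A) * (α + β * (-t)) * ((2 * μ - 1) / A * W (-t)) +
      (t ^ 2 - B / A) * (α + β * t) * ((2 * μ - 1) / A * W t))) =
      ∫ t in (0:ℝ)..1, 2 * α * ((2 * μ - 1) / A) * (t ^ 2 * W t - B / A * W t) := by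
    congr 1; ext t; rw [hWeven]; ring
  rw [e2, intervalIntegral.integral_const_mul, intervalIntegral.integral_sub
    ((by fun_prop : Continuous fun t : ℝ => t ^ 2 * W t).intervalIntegrable _ _)
    ((by fun_prop : Continuous fun t : ℝ => B / A * W t).intervalIntegrable _ _),
    intervalIntegral.integral_const_mul]
  have h3 : (∫ t in (0:ℝ)..1, t ^ 2 * W t) = B / (2 * (2 * μ - 1)) := by
    rw [hB]; field_simp
  have h4 : (∫ t in (0:ℝ)..1, W t) = A / (2 * (2 * μ - 1)) := by
    rw [hA]; field_simp
  rw [h3, h4]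
  field_simp
  ring
end

section
/- General unisolvency: let v₁, v₂, v₃ ∈ ℝ² be affinely independent with barycentric coordinates λᵢ (λᵢ(vⱼ) = δᵢⱼ), let γⱼ(t) = ((1+t)/2) v_{j+1} + ((1-t)/2) v_{j+2} (indices modulo 3). Let ω be an integrable probability density on [-1,1] (ω ≥ 0, ∫_{-1}^{1} ω = 1) with finite moments of all orders, and let q : ℝ → ℝ be a polynomial satisfying ∫_{-1}^{1} q(t) ω(t) dt = 0, ∫_{-1}^{1} t q(t) ω(t) dt = 0, and ∫_{-1}^{1} t² q(t) ω(t) dt ≠ 0. Define I_j^ω(f) = ∫_{-1}^{1} f(γⱼ(t)) ω(t) dt and L_j^ω(f) = ∫_{-1}^{1} q(t) f(γⱼ(t)) ω(t) dt, j = 1,2,3. If p₂ = Σᵢ₌₁³ aᵢ λᵢ + Σᵢ₌₁³ bᵢ λᵢ² with real coefficients aᵢ, bᵢ satisfies I_j^ω(p₂) = 0 and L_j^ω(p₂) = 0 for j = 1,2,3, then a₁ = a₂ = a₃ = b₁ = b₂ = b₃ = 0, and hence p₂ is the zero function. -/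
open MeasureTheory

/-- Parametrization of the edge `s_j` of the triangle, opposite to the vertex `v j`
(indices taken cyclically in `Fin 3`). -/
noncomputable def edgeParam (v : Fin 3 → ℝ × ℝ) (j : Fin 3) (t : ℝ) : ℝ × ℝ :=
  ((1 + t) / 2) • v (j + 1) + ((1 - t) / 2) • v (j + 2)

/-- General unisolvency: for any probability density `ω` on `[-1,1]` with finite
moments of all orders and any polynomial `q` with `∫ q ω = ∫ t q ω = 0` and
`∫ t² q ω ≠ 0`, a quadratic `p₂ = Σ aᵢ λᵢ + Σ bᵢ λᵢ²` annihilated by the six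
enriched edge functionals must be zero. -/
theorem unisolvent_general (v : Fin 3 → ℝ × ℝ) (hv : AffineIndependent ℝ v)
    (lam : Fin 3 → ℝ × ℝ → ℝ)
    (hlam : ∀ i, ∃ A : (ℝ × ℝ) →ᵃ[ℝ] ℝ, ∀ x, lam i x = A x)
    (hkr : ∀ i j, lam i (v j) = if i = j then (1:ℝ) else 0)
    (ω : ℝ → ℝ)
    (hInt : IntervalIntegrable ω volume (-1) 1)
    (hnn : ∀ t ∈ Set.Icc (-1:ℝ) 1, 0 ≤ ω t)
    (hone : ∫ t in (-1:ℝ)..1, ω t = 1)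
    (hmom : ∀ m : ℕ, IntervalIntegrable (fun t => t ^ m * ω t) volume (-1) 1)
    (q : Polynomial ℝ)
    (hq0 : ∫ t in (-1:ℝ)..1, q.eval t * ω t = 0)
    (hq1 : ∫ t in (-1:ℝ)..1, t * q.eval t * ω t = 0)
    (hq2 : (∫ t in (-1:ℝ)..1, t ^ 2 * q.eval t * ω t) ≠ 0)
    (a b : Fin 3 → ℝ)
    (hI : ∀ j : Fin 3,
      ∫ t in (-1:ℝ)..1,
        ((∑ i : Fin 3, a i * lam i (edgeParam v j t))
          + ∑ i : Fin 3, b i * (lam i (edgeParam v j t)) ^ 2) * ω t = 0)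
    (hL : ∀ j : Fin 3,
      ∫ t in (-1:ℝ)..1,
        q.eval t *
          ((∑ i : Fin 3, a i * lam i (edgeParam v j t))
            + ∑ i : Fin 3, b i * (lam i (edgeParam v j t)) ^ 2) * ω t = 0) :
    (∀ i, a i = 0) ∧ (∀ i, b i = 0) ∧
      ∀ x : ℝ × ℝ, (∑ i : Fin 3, a i * lam i x) + ∑ i : Fin 3, b i * (lam i x) ^ 2 = 0 := by
  have hci : ∀ f : ℝ → ℝ, Continuous f → IntervalIntegrable (fun t => f t * ω t) volume (-1) 1 :=
    fun f hf => hInt.continuousOn_mul hf.continuousOn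
  have hedge : ∀ i j t, lam i (edgeParam v j t)
      = ((1 + t) / 2) * (if i = j + 1 then (1:ℝ) else 0)
        + ((1 - t) / 2) * (if i = j + 2 then (1:ℝ) else 0) := by
    intro i j t
    rw [← hkr, ← hkr]
    obtain ⟨A, hA⟩ := hlam i
    simp only [hA]
    have h1 : edgeParam v j t = AffineMap.lineMap (v (j + 2)) (v (j + 1)) ((1 + t) / 2) := by
      rw [AffineMap.lineMap_apply_module, edgeParam, add_comm]
      congr 2
      ring
    rw [h1, AffineMap.apply_lineMap, AffineMap.lineMap_apply_module]
    simp only [smul_eq_mul]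
    ring
  have hp : ∀ j t, (∑ i : Fin 3, a i * lam i (edgeParam v j t))
          + ∑ i : Fin 3, b i * (lam i (edgeParam v j t)) ^ 2
      = a (j + 1) * ((1 + t) / 2) + a (j + 2) * ((1 - t) / 2)
        + (b (j + 1) * ((1 + t) / 2) ^ 2 + b (j + 2) * ((1 - t) / 2) ^ 2) := by
    intro j t
    simp only [hedge, Fin.sum_univ_three]
    fin_cases j <;> simp <;> ring
  simp only [hp] at hI hL
  have hqc : Continuous fun t => q.eval t := q.continuous
  have hbs : ∀ j : Fin 3, b (j + 1) + b (j + 2) = 0 := by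
    intro j
    have h := hL j
    have e : (fun t : ℝ => q.eval t * (a (j + 1) * ((1 + t) / 2) + a (j + 2) * ((1 - t) / 2)
        + (b (j + 1) * ((1 + t) / 2) ^ 2 + b (j + 2) * ((1 - t) / 2) ^ 2)) * ω t)
      = fun t => ((a (j + 1) + a (j + 2)) / 2 + (b (j + 1) + b (j + 2)) / 4) * (q.eval t * ω t)
        + ((a (j + 1) - a (j + 2)) / 2 + (b (j + 1) - b (j + 2)) / 2) * (t * q.eval t * ω t)
        + ((b (j + 1) + b (j + 2)) / 4) * (t ^ 2 * q.eval t * ω t) := by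
      funext t; ring
    have i0 := hci (fun t => q.eval t) hqc
    have i1 := hci (fun t => t * q.eval t) (by fun_prop)
    have i2 := hci (fun t => t ^ 2 * q.eval t) (by fun_prop)
    rw [e, intervalIntegral.integral_add ((i0.const_mul _).add (i1.const_mul _)) (i2.const_mul _),
      intervalIntegral.integral_add (i0.const_mul _) (i1.const_mul _),
      intervalIntegral.integral_const_mul, intervalIntegral.integral_const_mul,
      intervalIntegral.integral_const_mul, hq0, hq1] at h
    have h' : (b (j + 1) + b (j + 2)) / 4 = 0 := by
      rcases mul_eq_zero.1 (by linarith [h] : (b (j + 1) + b (j + 2)) / 4 *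
        (∫ t in (-1:ℝ)..1, t ^ 2 * q.eval t * ω t) = 0) with h | h
      · exact h
      · exact absurd h hq2
    linarith
  have hb : ∀ i, b i = 0 := by
    have h0 := hbs 0
    have h1 := hbs 1
    have h2 := hbs 2
    have e1 : (1 : Fin 3) + 1 = 2 := rfl
    have e2 : (1 : Fin 3) + 2 = 0 := rfl
    have e3 : (2 : Fin 3) + 1 = 0 := rfl
    have e4 : (2 : Fin 3) + 2 = 1 := rfl
    simp only [zero_add, e1, e2, e3, e4] at h0 h1 h2
    intro i
    fin_cases i <;> simp <;> linarith
  obtain ⟨m, hm⟩ : ∃ m : ℝ, m = ∫ t in (-1:ℝ)..1, t * ω t := ⟨_, rfl⟩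
  have has : ∀ j : Fin 3, a (j + 1) * ((1 + m) / 2) + a (j + 2) * ((1 - m) / 2) = 0 := by
    intro j
    have h := hI j
    have e : (fun t : ℝ => (a (j + 1) * ((1 + t) / 2) + a (j + 2) * ((1 - t) / 2)
        + (b (j + 1) * ((1 + t) / 2) ^ 2 + b (j + 2) * ((1 - t) / 2) ^ 2)) * ω t)
      = fun t => ((a (j + 1) + a (j + 2)) / 2) * ω t
        + ((a (j + 1) - a (j + 2)) / 2) * (t * ω t) := by
      funext t; rw [hb, hb]; ring
    have i1 := hci (fun t => t) continuous_id
    rw [e, intervalIntegral.integral_add (hInt.const_mul _) (i1.const_mul _),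
      intervalIntegral.integral_const_mul, intervalIntegral.integral_const_mul, hone, ← hm] at h
    linarith
  have ha : ∀ i, a i = 0 := by
    have h0 := has 0
    have h1 := has 1
    have h2 := has 2
    have e1 : (1 : Fin 3) + 1 = 2 := rfl
    have e2 : (1 : Fin 3) + 2 = 0 := rfl
    have e3 : (2 : Fin 3) + 1 = 0 := rfl
    have e4 : (2 : Fin 3) + 2 = 1 := rfl
    simp only [zero_add, e1, e2, e3, e4] at h0 h1 h2
    have key : ∀ x y z : ℝ, x * ((1 + m) / 2) + y * ((1 - m) / 2) = 0 →
        y * ((1 + m) / 2) + z * ((1 - m) / 2) = 0 →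
        z * ((1 + m) / 2) + x * ((1 - m) / 2) = 0 → x = 0 := by
      intro x y z h0 h1 h2
      have h : x * ((1 + 3 * m ^ 2) / 4) = 0 := by
        linear_combination ((1 + m) / 2) ^ 2 * h0 - ((1 + m) / 2) * ((1 - m) / 2) * h1
          + ((1 - m) / 2) ^ 2 * h2
      rcases mul_eq_zero.1 h with h | h
      · exact h
      · nlinarith [sq_nonneg m]
    intro i
    fin_cases i
    · exact key _ _ _ h2 h0 h1
    · exact key _ _ _ h0 h1 h2
    · exact key _ _ _ h1 h2 h0
  exact ⟨ha, hb, fun x => by simp [ha, hb]⟩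
end

section
/- General basis functions for even densities: let v₁, v₂, v₃ ∈ ℝ² be affinely independent with barycentric coordinates λᵢ (λᵢ(vⱼ) = δᵢⱼ), γⱼ(t) = ((1+t)/2) v_{j+1} + ((1-t)/2) v_{j+2} (indices modulo 3). Let ω be an even integrable probability density on [-1,1] with finite moments, let μ_{2,ω} = ∫_{-1}^{1} t² ω(t) dt, and set q(t) = t² - μ_{2,ω}, ‖q‖²_{2,ω} = ∫_{-1}^{1} q(t)² ω(t) dt, and assume ‖q‖²_{2,ω} ≠ 0. Define φ_{ω,i} = 1 - 2λᵢ and ψ_{ω,i} = -A_ω φ_{ω,i} + (2/‖q‖²_{2,ω})(-λᵢ² + λ_{i+1}² + λ_{i+2}²), where A_ω = (1 + μ_{2,ω})/‖q‖²_{2,ω}. Then for all i, j ∈ {1,2,3}: I_j^ω(φ_{ω,i}) = δᵢⱼ, L_j^ω(φ_{ω,i}) = 0, I_j^ω(ψ_{ω,i}) = 0, and L_j^ω(ψ_{ω,i}) = δᵢⱼ, where I_j^ω(f) = ∫_{-1}^{1} f(γⱼ(t)) ω(t) dt and L_j^ω(f) = ∫_{-1}^{1} q(t) f(γⱼ(t))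 ω(t) dt. -/
open MeasureTheory

theorem odd_int_zero (f : ℝ → ℝ) (h : ∀ t, f (-t) = - f t) :
    ∫ t in (-1:ℝ)..1, f t = 0 := by
  have h1 := intervalIntegral.integral_comp_neg (a := -1) (b := 1) f
  simp only [h, intervalIntegral.integral_neg, neg_neg] at h1
  linarith

theorem lam_edge (v : Fin 3 → ℝ × ℝ) (l : ℝ × ℝ → ℝ)
    (hl : ∃ A : (ℝ × ℝ) →ᵃ[ℝ] ℝ, ∀ x, l x = A x) (j : Fin 3) (t : ℝ) :
    l (edgeParam v j t) = (1 + t) / 2 * l (v (j + 1)) + (1 - t) / 2 * l (v (j + 2)) := by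
  obtain ⟨A, hA⟩ := hl
  have e : edgeParam v j t = AffineMap.lineMap (v (j + 2)) (v (j + 1)) ((1 + t) / 2) := by
    rw [AffineMap.lineMap_apply_module]
    unfold edgeParam
    rw [add_comm]
    congr 2
    ring
  rw [hA, hA, hA, e, AffineMap.apply_lineMap, AffineMap.lineMap_apply_module]
  simp only [smul_eq_mul]
  ring

/-- General basis functions for an even probability density `ω` on `[-1,1]`:
with `q(t) = t² - μ_{2,ω}`, `‖q‖²_{2,ω} = ∫ q² ω ≠ 0`,
`A_ω = (1 + μ_{2,ω})/‖q‖²_{2,ω}`, the functions `φ_{ω,i} = 1 - 2λᵢ` and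
`ψ_{ω,i} = -A_ω φ_{ω,i} + (2/‖q‖²_{2,ω})(-λᵢ² + λ_{i+1}² + λ_{i+2}²)`
form the dual basis of the enriched edge functionals `I_j^ω, L_j^ω`. -/
theorem basis_general_even (v : Fin 3 → ℝ × ℝ) (hv : AffineIndependent ℝ v)
    (lam : Fin 3 → ℝ × ℝ → ℝ)
    (hlam : ∀ i, ∃ A : (ℝ × ℝ) →ᵃ[ℝ] ℝ, ∀ x, lam i x = A x)
    (hkr : ∀ i j, lam i (v j) = if i = j then (1:ℝ) else 0)
    (ω : ℝ → ℝ)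
    (hInt : IntervalIntegrable ω volume (-1) 1)
    (hnn : ∀ t ∈ Set.Icc (-1:ℝ) 1, 0 ≤ ω t)
    (hone : ∫ t in (-1:ℝ)..1, ω t = 1)
    (heven : ∀ t, ω (-t) = ω t)
    (hmom : ∀ m : ℕ, IntervalIntegrable (fun t => t ^ m * ω t) volume (-1) 1)
    (m2 : ℝ) (hm2 : m2 = ∫ t in (-1:ℝ)..1, t ^ 2 * ω t)
    (q : ℝ → ℝ) (hq : ∀ t, q t = t ^ 2 - m2)
    (nq : ℝ) (hnq : nq = ∫ t in (-1:ℝ)..1, (q t) ^ 2 * ω t) (hnq0 : nq ≠ 0)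
    (A : ℝ) (hA : A = (1 + m2) / nq)
    (φ : Fin 3 → ℝ × ℝ → ℝ) (hφ : ∀ i x, φ i x = 1 - 2 * lam i x)
    (ψ : Fin 3 → ℝ × ℝ → ℝ)
    (hψ : ∀ i x, ψ i x = -A * φ i x
      + (2 / nq) * (-(lam i x) ^ 2 + (lam (i + 1) x) ^ 2 + (lam (i + 2) x) ^ 2))
    (i j : Fin 3) :
    (∫ t in (-1:ℝ)..1, φ i (edgeParam v j t) * ω t = if i = j then (1:ℝ) else 0) ∧
    (∫ t in (-1:ℝ)..1, q t * φ i (edgeParam v j t) * ω t = 0) ∧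
    (∫ t in (-1:ℝ)..1, ψ i (edgeParam v j t) * ω t = 0) ∧
    (∫ t in (-1:ℝ)..1, q t * ψ i (edgeParam v j t) * ω t
        = if i = j then (1:ℝ) else 0) := by
  have hqi : ∫ t in (-1:ℝ)..1, q t * ω t = 0 := by
    have e : (fun t => q t * ω t) = fun t => t ^ 2 * ω t - m2 * ω t := by
      funext t; rw [hq]; ring
    rw [e, intervalIntegral.integral_sub (hmom 2) (hInt.const_mul m2),
      intervalIntegral.integral_const_mul, hone, ← hm2]
    ring
  by_cases hij : i = j
  · subst hij
    have h0 : ∀ t, φ i (edgeParam v i t) = 1 := by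
      intro t
      rw [hφ, lam_edge v _ (hlam i), hkr, hkr]
      fin_cases i <;> simp
    have h1 : ∀ t, ψ i (edgeParam v i t) = nq⁻¹ * q t := by
      intro t
      rw [hψ, h0, lam_edge v _ (hlam i), lam_edge v _ (hlam (i+1)), lam_edge v _ (hlam (i+2)),
        hkr, hkr, hkr, hkr, hkr, hkr, hA, hq]
      fin_cases i <;> simp <;> field_simp <;> ring
    refine ⟨?_, ?_, ?_, ?_⟩
    · simp [h0, hone]
    · simp [h0, hqi]
    · simp only [h1, mul_assoc, intervalIntegral.integral_const_mul, hqi, mul_zero]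
    · have e : (fun t => q t * ψ i (edgeParam v i t) * ω t)
          = fun t => nq⁻¹ * ((q t) ^ 2 * ω t) := by
        funext t; rw [h1]; ring
      rw [e, intervalIntegral.integral_const_mul, ← hnq]
      simp [hnq0]
  · have h0 : ∀ t, φ i (edgeParam v j (-t)) = - φ i (edgeParam v j t) := by
      intro t
      rw [hφ, hφ, lam_edge v _ (hlam i), lam_edge v _ (hlam i), hkr, hkr]
      fin_cases i <;> fin_cases j <;> simp at hij ⊢ <;> ring
    have h1 : ∀ t, ψ i (edgeParam v j (-t)) = - ψ i (edgeParam v j t) := by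
      intro t
      rw [hψ, hψ, h0]
      simp only [lam_edge v _ (hlam _), hkr]
      fin_cases i <;> fin_cases j <;> simp at hij ⊢ <;> ring
    have hq' : ∀ t, q (-t) = q t := by
      intro t; rw [hq, hq]; ring
    simp only [hij, if_false]
    refine ⟨?_, ?_, ?_, ?_⟩ <;> apply odd_int_zero <;> intro t <;>
      simp only [h0, h1, hq', heven] <;> ring
end
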